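/- Let c ≥ 3 and b ≥ 1 be integers. The spectrum of the 2-down Laplacian δ₁(𝒯_{c,b}) δ₁(𝒯_{c,b})ᵀ, a square matrix of size C(c,3) + b·C(c,2), consists of the eigenvalue 0 with multiplicity C(c,3) + (b−1)·C(c−1,2), the eigenvalue c with multiplicity (b−1)(c−1), and the eigenvalue b + c with multiplicity C(c,2) (eigenvalues of multiplicity 0 being omitted). -/

import Mathlib

open Finset Matrix

/-- The sign `[T : e]` of an edge `e` in a triangle `T`. -/
noncomputable def triSign (T e : Finset ℕ) : ℝ :=
  if e ⊆ T ∧ e.card = 2 ∧ T.card = 3 then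
    if (T \ e).max = T.max ∨ (T \ e).min = T.min then 1 else -1
  else 0

/-- A triangle family: a nonempty finite set of 3-element subsets of ℕ. -/
def IsTriFam (F : Finset (Finset ℕ)) : Prop :=
  F.Nonempty ∧ ∀ T ∈ F, T.card = 3

/-- The edges of the support graph of a triangle family. -/
def edgesOf (F : Finset (Finset ℕ)) : Finset (Finset ℕ) :=
  F.biUnion fun T => T.powersetCard 2

/-- The vertices of the support graph of a triangle family. -/
def vertsOf (F : Finset (Finset ℕ)) : Finset ℕ :=
  F.biUnion id

/-- The signed edge-triangle incidence matrix of a triangle family. -/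
noncomputable def delta1 (F : Finset (Finset ℕ)) :
    Matrix {T // T ∈ F} {e // e ∈ edgesOf F} ℝ :=
  Matrix.of fun T e => triSign T.1 e.1

/-- The smallest positive eigenvalue of a matrix. -/
noncomputable def lambdaMinPos {m : Type*} [Fintype m] (M : Matrix m m ℝ) : ℝ :=
  sInf {μ : ℝ | 0 < μ ∧ ∃ v : m → ℝ, v ≠ 0 ∧ M.mulVec v = μ • v}

/-- `λ(𝒯)`: the smallest positive eigenvalue of `δ₁(𝒯)ᵀ δ₁(𝒯)`. -/
noncomputable def lam (F : Finset (Finset ℕ)) : ℝ :=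
  lambdaMinPos ((delta1 F)ᵀ * delta1 F)

/-- The neighborhood of `x` in the support graph `Γ₀(F)`. -/
def nbrs (F : Finset (Finset ℕ)) (x : ℕ) : Finset ℕ :=
  (vertsOf F).filter fun y => x ≠ y ∧ ∃ T ∈ F, x ∈ T ∧ y ∈ T

/-- `φ(t)`: the maximum of `λ(𝒯)` over triangle families with `|𝒯| = t`. -/
noncomputable def phi (t : ℕ) : ℝ :=
  sSup {r : ℝ | ∃ F : Finset (Finset ℕ), IsTriFam F ∧ F.card = t ∧ lam F = r}

/-- `Λ(t) = max_{1 ≤ s ≤ t} φ(s)`. -/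
noncomputable def Lam (t : ℕ) : ℝ :=
  sSup {r : ℝ | ∃ s : ℕ, 1 ≤ s ∧ s ≤ t ∧ phi s = r}

/-- `H(n) = min{ s ≥ 1 : φ(C(n,3)+s) > n - 1 }`. -/
noncomputable def Hfun (n : ℕ) : ℕ :=
  sInf {s : ℕ | 1 ≤ s ∧ (n : ℝ) - 1 < phi (n.choose 3 + s)}

/-- The triangle family `𝒯_{c,b}`: all 3-cliques of `K_c ∨ (b isolated vertices)`. -/
def Tcb (c b : ℕ) : Finset (Finset ℕ) :=
  ((Finset.Icc 1 c).powersetCard 3) ∪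
    (Finset.Icc (c+1) (c+b)).biUnion
      (fun i => ((Finset.Icc 1 c).powersetCard 2).image (fun p => insert i p))

/-!
If `A * D = 0`, then `charmatrix (A' * A) * charmatrix (D * D') = X • charmatrix (A' * A + D * D')`.
Since `δ₁ δ₀ = 0` and `δ₀` kills the constant vector, the characteristic polynomials of the down
Laplacians `δ₁ δ₁ᵀ` and `δ₀ δ₀ᵀ` are therefore determined by those of the Hodge Laplacians on edges
and on vertices. In a Hodge Laplacian the up and the down parts cancel at the entry of two distinct
simplices whose union is again a simplex. For the join of `K_c` with `b` isolated vertices this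
leaves a block diagonal matrix: `b + c` times the identity on the simplices inside `K_c`, and for
each simplex `p` of `K_c` of one dimension less, the block `c + w wᵀ` on the `b` cones over `p`,
where `w` is a vector of signs. Such a block has eigenvalues `c`, with multiplicity `b - 1`, and
`b + c`.
-/

section Charpoly

open Polynomial

variable {l m n R : Type*} [Fintype l] [Fintype m] [Fintype n] [DecidableEq l] [DecidableEq m]
  [CommRing R]

theorem charpoly_mul_charpoly_of_mul_eq_zero [DecidableEq n] {A B : Matrix n n R} (h : A * B = 0) :
    A.charpoly * B.charpoly = X ^ Fintype.card n * (A + B).charpoly := by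
  have hC : C.mapMatrix A * C.mapMatrix B = 0 := by rw [← map_mul, h, map_zero]
  have hmul : A.charmatrix * B.charmatrix = scalar n X * (A + B).charmatrix := by
    have hX := (scalar_commute (X : R[X]) (Commute.all _) (C.mapMatrix A)).eq
    simp only [charmatrix, map_add, sub_mul, mul_sub, mul_add, hC, hX]
    abel
  rw [charpoly, charpoly, charpoly, ← det_mul, hmul, det_mul, scalar_apply, det_diagonal,
    prod_const, card_univ]

theorem charpoly_mul_charpoly_of_comp_eq_zero {A : Matrix l m R} {D : Matrix m n R}
    (h : A * D = 0) (A' : Matrix m l R) (D' : Matrix n m R) :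
    (A * A').charpoly * (D * D').charpoly =
      X ^ Fintype.card l * (A' * A + D * D').charpoly := by
  have hzero : A' * A * (D * D') = 0 := by
    rw [Matrix.mul_assoc, ← Matrix.mul_assoc A, h, Matrix.zero_mul, Matrix.mul_zero]
  apply (isRegular_X_pow (Fintype.card m)).left
  calc X ^ Fintype.card m * ((A * A').charpoly * (D * D').charpoly)
      = X ^ Fintype.card l * ((A' * A).charpoly * (D * D').charpoly) := by
        rw [← mul_assoc, charpoly_mul_comm', mul_assoc]
    _ = X ^ Fintype.card m * (X ^ Fintype.card l * (A' * A + D * D').charpoly) := by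
        rw [charpoly_mul_charpoly_of_mul_eq_zero hzero, mul_left_comm]

variable [DecidableEq n]

theorem charpoly_scalar (a : R) : (scalar n a).charpoly = (X - C a) ^ Fintype.card n := by
  rw [scalar_apply, charpoly_diagonal, prod_const, card_univ]

theorem charpoly_scalar_add_vecMulVec [Nonempty n] (a : R) (u v : n → R) :
    (scalar n a + vecMulVec u v).charpoly =
      (X - C a) ^ (Fintype.card n - 1) * (X - C (a + u ⬝ᵥ v)) := by
  obtain ⟨k, hk⟩ := Nat.exists_eq_add_of_lt (Fintype.card_pos (α := n))
  rw [show scalar n a + vecMulVec u v = vecMulVec u v - scalar n (-a) by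
    rw [map_neg, sub_neg_eq_add, add_comm], charpoly_sub_scalar, charpoly_vecMulVec, hk]
  simp only [zero_add, pow_succ, add_tsub_cancel_right, smul_eq_C_mul, map_neg, ← sub_eq_add_neg,
    sub_comp, mul_comp, pow_comp, X_comp, C_comp, map_add]
  ring

theorem charpoly_vecMulVec_one_one [Nonempty n] :
    (vecMulVec (1 : n → R) 1).charpoly =
      X ^ (Fintype.card n - 1) * (X - C (Fintype.card n : R)) := by
  simpa only [map_zero, zero_add, sub_zero, one_dotProduct_one] using
    charpoly_scalar_add_vecMulVec (0 : R) (1 : n → R) 1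

theorem charpoly_blockDiagonal (M : l → Matrix n n R) :
    (blockDiagonal M).charpoly = ∏ i, (M i).charpoly := by
  have h : (blockDiagonal M).charmatrix = blockDiagonal fun i => (M i).charmatrix := by
    ext ⟨i, j⟩ ⟨i', j'⟩ : 1
    by_cases hj : j = j' <;> by_cases hi : i = i' <;>
      simp [blockDiagonal_apply, hi, hj]
  rw [charpoly, h, det_blockDiagonal]
  rfl

end Charpoly

section Signs

variable {e T : Finset ℕ} {v x y z : ℕ}

/-- The sign `[e : v]` of a vertex `v` in an edge `e`: `+1` at the larger end of `e` and `-1` at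
the smaller one. -/
noncomputable def vertexSign (e : Finset ℕ) (v : ℕ) : ℝ :=
  if v ∈ e then if ∀ w ∈ e, w ≤ v then 1 else -1 else 0

/-- The signed vertex-edge incidence matrix of a set `E` of edges on a vertex set `V`. -/
noncomputable def delta0 (E : Finset (Finset ℕ)) (V : Finset ℕ) :
    Matrix {e // e ∈ E} {v // v ∈ V} ℝ :=
  Matrix.of fun e v => vertexSign e.1 v.1

theorem triSign_eq_zero (h : ¬e ⊆ T) : triSign T e = 0 :=
  if_neg fun h' => h h'.1

theorem vertexSign_eq_zero (h : v ∉ e) : vertexSign e v = 0 :=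
  if_neg h

theorem triSign_mul_self (h : e ⊆ T) (he : #e = 2) (hT : #T = 3) :
    triSign T e * triSign T e = 1 := by
  rw [triSign, if_pos ⟨h, he, hT⟩]
  split_ifs <;> norm_num

theorem vertexSign_mul_self (h : v ∈ e) : vertexSign e v * vertexSign e v = 1 := by
  rw [vertexSign, if_pos h]
  split_ifs <;> norm_num

theorem vertexSign_pair (h : x ≠ y) : vertexSign {x, y} x = if y < x then 1 else -1 := by
  rw [vertexSign, if_pos (mem_insert_self x _)]
  simp only [mem_insert, mem_singleton, forall_eq_or_imp, forall_eq]
  grind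

theorem vertexSign_pair_add_vertexSign_pair (h : x ≠ y) :
    vertexSign {x, y} x + vertexSign {x, y} y = 0 := by
  rw [vertexSign_pair h, pair_comm, vertexSign_pair h.symm]
  grind

theorem triSign_pair (hxy : x ≠ y) (hxz : x ≠ z) (hyz : y ≠ z) :
    triSign {x, y, z} {x, y} = if x < z ∧ y < z ∨ z < x ∧ z < y then 1 else -1 := by
  have hdiff : ({x, y, z} : Finset ℕ) \ {x, y} = {z} := by grind
  have hcard : #{x, y, z} = 3 := card_eq_three.2 ⟨x, y, z, hxy, hxz, hyz, rfl⟩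
  rw [triSign, if_pos ⟨by grind, card_pair hxy, hcard⟩, hdiff]
  simp only [max_insert, max_singleton, min_insert, min_singleton, ← WithBot.coe_max,
    ← WithTop.coe_min, WithBot.coe_inj, WithTop.coe_inj]
  grind

theorem triSign_mul_triSign (hxy : x ≠ y) (hxz : x ≠ z) (hyz : y ≠ z) :
    triSign {x, y, z} {x, y} * triSign {x, y, z} {x, z} =
      -(vertexSign {x, y} x * vertexSign {x, z} x) := by
  rw [triSign_pair hxy hxz hyz, pair_comm y z, triSign_pair hxz hxy hyz.symm,
    vertexSign_pair hxy, vertexSign_pair hxz]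
  grind

theorem sum_powersetCard_two_triple (hxy : x ≠ y) (hxz : x ≠ z) (hyz : y ≠ z)
    (g : Finset ℕ → ℝ) :
    ∑ e ∈ powersetCard 2 {x, y, z}, g e = g {y, z} + (g {x, y} + g {x, z}) := by
  have hx : x ∉ ({y, z} : Finset ℕ) := by grind
  have hpairs : powersetCard 2 {y, z} = {({y, z} : Finset ℕ)} := by
    rw [← card_pair hyz, powersetCard_self]
  rw [powersetCard_succ_insert hx, hpairs, powersetCard_one, map_insert, map_singleton,
    image_insert, image_singleton, sum_union, sum_singleton, sum_pair]
  · rfl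
  · exact fun h => by simpa [hxy.symm, hyz] using Finset.ext_iff.1 h y
  · simp only [disjoint_singleton_left]
    grind

theorem sum_triSign_mul_vertexSign (hT : #T = 3) (v : ℕ) :
    ∑ e ∈ powersetCard 2 T, triSign T e * vertexSign e v = 0 := by
  by_cases hv : v ∈ T
  · obtain ⟨y, z, hyz, hT'⟩ := card_eq_two.1 (by grind : #(T.erase v) = 2)
    obtain ⟨hvy, hvz⟩ : v ≠ y ∧ v ≠ z := by simpa [hT'] using notMem_erase v T
    obtain rfl : T = {v, y, z} := by rw [← insert_erase hv, hT']
    rw [sum_powersetCard_two_triple hvy hvz hyz, vertexSign_eq_zero (by grind),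
      triSign_pair hvy hvz hyz, pair_comm y z, triSign_pair hvz hvy hyz.symm,
      vertexSign_pair hvy, vertexSign_pair hvz]
    grind
  · refine sum_eq_zero fun e he => ?_
    rw [vertexSign_eq_zero fun hve => hv ((mem_powersetCard.1 he).1 hve), mul_zero]

end Signs

section Hodge

variable {F E : Finset (Finset ℕ)} {V e e' : Finset ℕ}

theorem delta1_mul_delta0 (hF : ∀ T ∈ F, #T = 3) (V : Finset ℕ) :
    delta1 F * delta0 (edgesOf F) V = 0 := by
  ext ⟨T, hT⟩ ⟨v, hv⟩
  have hsub : powersetCard 2 T ⊆ edgesOf F := subset_biUnion_of_mem (powersetCard 2) hT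
  rw [Matrix.zero_apply, ← sum_triSign_mul_vertexSign (hF T hT) v]
  refine (sum_coe_sort (edgesOf F) fun e => triSign T e * vertexSign e v).trans
    (sum_subset hsub fun e he heT => ?_).symm
  obtain ⟨T', -, he⟩ := mem_biUnion.1 he
  rw [triSign_eq_zero fun h => heT (mem_powersetCard.2 ⟨h, (mem_powersetCard.1 he).2⟩), zero_mul]

theorem delta0_mulVec_one (hE : ∀ e ∈ E, #e = 2 ∧ e ⊆ V) : delta0 E V *ᵥ 1 = 0 := by
  ext ⟨e, he⟩
  obtain ⟨hcard, hsub⟩ := hE e he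
  obtain ⟨x, y, hxy, rfl⟩ := card_eq_two.1 hcard
  calc (delta0 E V *ᵥ 1) ⟨{x, y}, he⟩
      = ∑ v : {v // v ∈ V}, vertexSign {x, y} v := by simp [mulVec, dotProduct, delta0]
    _ = ∑ v ∈ {x, y}, vertexSign {x, y} v := by
        rw [sum_coe_sort V, sum_subset hsub fun v _ hv => vertexSign_eq_zero hv]
    _ = 0 := by rw [sum_pair hxy, vertexSign_pair_add_vertexSign_pair hxy]

theorem sum_vertexSign_mul_vertexSign (he : e ⊆ V) (e' : Finset ℕ) :
    ∑ v ∈ V, vertexSign e v * vertexSign e' v =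
      ∑ v ∈ e ∩ e', vertexSign e v * vertexSign e' v := by
  refine (sum_subset (inter_subset_left.trans he) fun v _ hv => ?_).symm
  by_cases hve : v ∈ e
  · rw [vertexSign_eq_zero (e := e') (by grind), mul_zero]
  · rw [vertexSign_eq_zero hve, zero_mul]

theorem triSign_union_mul_triSign_union (he : #e = 2) (he' : #e' = 2) (h : #(e ∪ e') = 3) :
    triSign (e ∪ e') e * triSign (e ∪ e') e' =
      -∑ v ∈ e ∩ e', vertexSign e v * vertexSign e' v := by
  obtain ⟨v, hv⟩ := card_eq_one.1 (by grind : #(e ∩ e') = 1)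
  obtain ⟨hve, hve'⟩ : v ∈ e ∧ v ∈ e' := mem_inter.1 (hv ▸ mem_singleton_self v)
  obtain ⟨y, hy⟩ := card_eq_one.1 (by grind : #(e.erase v) = 1)
  obtain ⟨z, hz⟩ := card_eq_one.1 (by grind : #(e'.erase v) = 1)
  obtain rfl : e = {v, y} := by rw [← insert_erase hve, hy]
  obtain rfl : e' = {v, z} := by rw [← insert_erase hve', hz]
  rw [hv, sum_singleton, show ({v, y} ∪ {v, z} : Finset ℕ) = {v, y, z} by grind]
  exact triSign_mul_triSign (by grind) (by grind) (by grind)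

theorem sum_triSign_mul_triSign_of_ne (hF : ∀ T ∈ F, #T = 3) (he : #e = 2) (he' : #e' = 2)
    (hne : e ≠ e') :
    ∑ T ∈ F, triSign T e * triSign T e' =
      if e ∪ e' ∈ F then -∑ v ∈ e ∩ e', vertexSign e v * vertexSign e' v else 0 := by
  have hzero : ∀ T ∈ F, T ≠ e ∪ e' → triSign T e * triSign T e' = 0 := by
    intro T hT hTne
    by_contra h
    have hsub : e ∪ e' ⊆ T := union_subset (not_imp_comm.1 triSign_eq_zero (left_ne_zero_of_mul h))
      (not_imp_comm.1 triSign_eq_zero (right_ne_zero_of_mul h))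
    have hlt : #e < #(e ∪ e') := card_lt_card <| left_lt_sup.2 fun h =>
      hne (eq_of_subset_of_card_le h (he.trans he'.symm).le).symm
    exact hTne (eq_of_subset_of_card_le hsub (by grind)).symm
  split_ifs with hmem
  · rw [sum_eq_single_of_mem _ hmem hzero, triSign_union_mul_triSign_union he he' (hF _ hmem)]
  · exact sum_eq_zero fun T hT => hzero T hT (by grind)

/-- The Hodge Laplacian on the edges of the triangle family `F`, whose vertices lie in `V`: the
sum of the 1-up Laplacian and the 1-down Laplacian. -/
noncomputable def hodgeLaplacian (F : Finset (Finset ℕ)) (V : Finset ℕ) :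
    Matrix {e // e ∈ edgesOf F} {e // e ∈ edgesOf F} ℝ :=
  (delta1 F)ᵀ * delta1 F + delta0 (edgesOf F) V * (delta0 (edgesOf F) V)ᵀ

theorem card_and_subset_of_mem_edgesOf (hF : ∀ T ∈ F, T ⊆ V) (he : e ∈ edgesOf F) :
    #e = 2 ∧ e ⊆ V := by
  obtain ⟨T, hT, he⟩ := mem_biUnion.1 he
  obtain ⟨heT, hcard⟩ := mem_powersetCard.1 he
  exact ⟨hcard, heT.trans (hF T hT)⟩

theorem hodgeLaplacian_apply (hF : ∀ T ∈ F, T ⊆ V) (e e' : {e // e ∈ edgesOf F}) :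
    hodgeLaplacian F V e e' = ∑ T ∈ F, triSign T e * triSign T e' +
      ∑ v ∈ e.1 ∩ e'.1, vertexSign e v * vertexSign e' v := by
  rw [← sum_vertexSign_mul_vertexSign (card_and_subset_of_mem_edgesOf hF e.2).2]
  exact congrArg₂ (· + ·) (sum_coe_sort F fun T => triSign T e * triSign T e')
    (sum_coe_sort V fun v => vertexSign e v * vertexSign e' v)

theorem hodgeLaplacian_apply_self (hF : ∀ T ∈ F, #T = 3 ∧ T ⊆ V) (e : {e // e ∈ edgesOf F}) :
    hodgeLaplacian F V e e = #{T ∈ F | e.1 ⊆ T} + 2 := by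
  have he := (card_and_subset_of_mem_edgesOf (fun T hT => (hF T hT).2) e.2).1
  have hup : ∑ T ∈ F, triSign T e * triSign T e = #{T ∈ F | e.1 ⊆ T} := by
    rw [card_filter, Nat.cast_sum]
    refine sum_congr rfl fun T hT => ?_
    split_ifs with h
    · rw [triSign_mul_self h he (hF T hT).1, Nat.cast_one]
    · rw [triSign_eq_zero h, zero_mul, Nat.cast_zero]
  have hdown : ∑ v ∈ e.1, vertexSign e v * vertexSign e v = 2 := by
    rw [sum_congr rfl fun v => vertexSign_mul_self, sum_const, he, nsmul_one, Nat.cast_two]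
  rw [hodgeLaplacian_apply fun T hT => (hF T hT).2, inter_self, hup, hdown]

theorem hodgeLaplacian_apply_of_ne (hF : ∀ T ∈ F, #T = 3 ∧ T ⊆ V) {e e' : {e // e ∈ edgesOf F}}
    (h : e ≠ e') :
    hodgeLaplacian F V e e' =
      if e.1 ∪ e'.1 ∈ F then 0 else ∑ v ∈ e.1 ∩ e'.1, vertexSign e v * vertexSign e' v := by
  have hFV : ∀ T ∈ F, T ⊆ V := fun T hT => (hF T hT).2
  rw [hodgeLaplacian_apply hFV, sum_triSign_mul_triSign_of_ne (fun T hT => (hF T hT).1)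
    (card_and_subset_of_mem_edgesOf hFV e.2).1 (card_and_subset_of_mem_edgesOf hFV e'.2).1
    (Subtype.coe_ne_coe.2 h)]
  split_ifs
  · exact neg_add_cancel _
  · exact zero_add _

theorem delta0_transpose_mul_delta0_apply_self (E : Finset (Finset ℕ)) (v : {v // v ∈ V}) :
    ((delta0 E V)ᵀ * delta0 E V) v v = #{e ∈ E | v.1 ∈ e} := by
  rw [card_filter, Nat.cast_sum]
  refine (sum_coe_sort E fun e => vertexSign e v * vertexSign e v).trans
    (sum_congr rfl fun e _ => ?_)
  split_ifs with h
  · rw [vertexSign_mul_self h, Nat.cast_one]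
  · rw [vertexSign_eq_zero h, zero_mul, Nat.cast_zero]

theorem delta0_transpose_mul_delta0_apply_of_ne (hE : ∀ e ∈ E, #e = 2) {v w : {v // v ∈ V}}
    (h : v ≠ w) :
    ((delta0 E V)ᵀ * delta0 E V) v w = if {v.1, w.1} ∈ E then -1 else 0 := by
  have hvw : v.1 ≠ w.1 := Subtype.coe_ne_coe.2 h
  have hzero : ∀ e ∈ E, e ≠ {v.1, w.1} → vertexSign e v * vertexSign e w = 0 := by
    intro e he hne
    by_contra h0
    have hsub : {v.1, w.1} ⊆ e := by
      have := not_imp_comm.1 vertexSign_eq_zero (left_ne_zero_of_mul h0)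
      have := not_imp_comm.1 vertexSign_eq_zero (right_ne_zero_of_mul h0)
      grind
    exact hne (eq_of_subset_of_card_le hsub (by rw [hE e he, card_pair hvw])).symm
  refine (sum_coe_sort E fun e => vertexSign e v * vertexSign e w).trans ?_
  split_ifs with hmem
  · rw [sum_eq_single_of_mem _ hmem hzero, ← vertexSign_mul_self (mem_insert_self v.1 {w.1}),
      eq_neg_of_add_eq_zero_right (vertexSign_pair_add_vertexSign_pair hvw), mul_neg]
  · exact sum_eq_zero fun e he => hzero e he (by grind)

end Hodge

section Join

variable {F : Finset (Finset ℕ)} {A K B s p : Finset ℕ} {k u : ℕ}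

/-- The `(k + 1)`-cliques of the join of the complete graph on `K` with the edgeless graph on `B`,
for disjoint `K` and `B`. -/
def joinSimplices (K B : Finset ℕ) (k : ℕ) : Finset (Finset ℕ) :=
  K.powersetCard (k + 1) ∪ B.biUnion fun u => (K.powersetCard k).image fun p => insert u p

theorem mem_joinSimplices_iff_exists : s ∈ joinSimplices K B k ↔
    (s ⊆ K ∧ #s = k + 1) ∨ ∃ u ∈ B, ∃ p ⊆ K, #p = k ∧ insert u p = s := by
  simp only [joinSimplices, mem_union, mem_powersetCard, mem_biUnion, mem_image, and_assoc]

theorem mem_joinSimplices (h : Disjoint K B) :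
    s ∈ joinSimplices K B k ↔ s ⊆ K ∪ B ∧ #s = k + 1 ∧ #(s ∩ B) ≤ 1 := by
  rw [mem_joinSimplices_iff_exists]
  constructor
  · rintro (⟨hs, hcard⟩ | ⟨u, hu, p, hp, rfl, rfl⟩)
    · rw [disjoint_iff_inter_eq_empty.1 (h.mono_left hs)]
      exact ⟨hs.trans subset_union_left, hcard, Nat.zero_le _⟩
    · have hup : u ∉ p := fun hu' => disjoint_left.1 h (hp hu') hu
      rw [card_insert_of_notMem hup, insert_inter_of_mem hu,
        disjoint_iff_inter_eq_empty.1 (h.mono_left hp)]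
      exact ⟨insert_subset (mem_union_right _ hu) (hp.trans subset_union_left), rfl, le_rfl⟩
  · rintro ⟨hs, hcard, hB⟩
    rcases (s ∩ B).eq_empty_or_nonempty with hempty | ⟨u, hu⟩
    · exact .inl ⟨(disjoint_iff_inter_eq_empty.2 hempty).left_le_of_le_sup_right hs, hcard⟩
    · obtain ⟨hus, huB⟩ := mem_inter.1 hu
      refine .inr ⟨u, huB, s.erase u, fun w hw => ?_, by grind, insert_erase hus⟩
      obtain ⟨hwu, hws⟩ := mem_erase.1 hw
      exact (mem_union.1 (hs hws)).resolve_right fun hwB =>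
        hwu (card_le_one.1 hB w (mem_inter.2 ⟨hws, hwB⟩) u hu)

/-- The simplices of the join are those of `K` and the cones from the points of `B` over the
simplices of `K` of one dimension less. -/
noncomputable def joinSimplicesEquiv (h : Disjoint K B) (k : ℕ) :
    {s // s ∈ K.powersetCard (k + 1)} ⊕ {u // u ∈ B} × {p // p ∈ K.powersetCard k} ≃
      {s // s ∈ joinSimplices K B k} :=
  Equiv.ofBijective
    (Sum.elim (fun s => ⟨s.1, mem_union_left _ s.2⟩) fun q => ⟨insert q.1.1 q.2.1,
      mem_union_right _ (mem_biUnion.2 ⟨q.1, q.1.2, mem_image_of_mem _ q.2.2⟩)⟩) <| by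
    have hdisj {i : ℕ} (p : {p // p ∈ K.powersetCard i}) : Disjoint p.1 B :=
      h.mono_left (mem_powersetCard.1 p.2).1
    constructor
    · refine Function.Injective.sumElim ?_ ?_ ?_
      · exact fun s s' heq => Subtype.ext (Subtype.mk.inj heq)
      · rintro ⟨u, p⟩ ⟨u', p'⟩ heq
        replace heq : insert u.1 p.1 = insert u'.1 p'.1 := Subtype.ext_iff.1 heq
        obtain rfl : u = u' := by
          simpa only [insert_inter_of_mem, u.2, u'.2, disjoint_iff_inter_eq_empty.1 (hdisj _),
            insert_empty_eq, singleton_inj, Subtype.coe_inj] using congrArg (· ∩ B) heq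
        refine Prod.ext rfl (Subtype.ext ?_)
        rw [← erase_insert (disjoint_right.1 (hdisj p) u.2), heq,
          erase_insert (disjoint_right.1 (hdisj p') u.2)]
      · intro s q heq
        have hq : q.1.1 ∈ s.1 := Subtype.ext_iff.1 heq ▸ mem_insert_self q.1.1 q.2.1
        exact disjoint_right.1 (hdisj s) q.1.2 hq
    · rintro ⟨s, hs⟩
      rcases mem_union.1 hs with hs | hs
      · exact ⟨.inl ⟨s, hs⟩, rfl⟩
      · obtain ⟨u, hu, hs⟩ := mem_biUnion.1 hs
        obtain ⟨p, hp, rfl⟩ := mem_image.1 hs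
        exact ⟨.inr (⟨u, hu⟩, ⟨p, hp⟩), rfl⟩

theorem card_joinSimplices (h : Disjoint K B) (k : ℕ) :
    #(joinSimplices K B k) = (#K).choose (k + 1) + #B * (#K).choose k := by
  rw [← Fintype.card_coe, ← Fintype.card_congr (joinSimplicesEquiv h k), Fintype.card_sum,
    Fintype.card_prod]
  simp only [Fintype.card_coe, card_powersetCard]

theorem card_filter_subset_eq_card (hF : ∀ t ∈ F, #t = #s + 1)
    (hA : ∀ z, z ∈ A ↔ z ∉ s ∧ insert z s ∈ F) : #{t ∈ F | s ⊆ t} = #A := by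
  have himage : {t ∈ F | s ⊆ t} = A.image (insert · s) := by
    ext t
    rw [mem_filter, mem_image]
    constructor
    · rintro ⟨ht, hst⟩
      obtain ⟨z, hz, rfl⟩ := exists_eq_insert_iff.2 ⟨hst, (hF t ht).symm⟩
      exact ⟨z, (hA z).2 ⟨hz, ht⟩, rfl⟩
    · rintro ⟨z, hz, rfl⟩
      exact ⟨((hA z).1 hz).2, subset_insert z s⟩
  rw [himage, card_image_of_injOn (s.insert_inj_on.mono fun z hz => ((hA z).1 hz).1)]

theorem card_filter_subset_joinSimplices (h : Disjoint K B) (hs : s ⊆ K)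
    (hcard : #s = k + 1) :
    #{t ∈ joinSimplices K B (k + 1) | s ⊆ t} + (k + 1) = #K + #B := by
  have hsB : s ∩ B = ∅ := disjoint_iff_inter_eq_empty.1 (h.mono_left hs)
  rw [card_filter_subset_eq_card (A := (K ∪ B) \ s), ← hcard,
    card_sdiff_add_card_eq_card (hs.trans subset_union_left), card_union_of_disjoint h]
  · exact fun t ht => by rw [((mem_joinSimplices h).1 ht).2.1, hcard]
  · intro z
    rw [mem_joinSimplices h]
    grind

theorem card_filter_insert_subset_joinSimplices (h : Disjoint K B) (hu : u ∈ B) (hp : p ⊆ K)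
    (hcard : #p = k) :
    #{t ∈ joinSimplices K B (k + 1) | insert u p ⊆ t} + k = #K := by
  have hup : u ∉ p := fun hu' => disjoint_left.1 h (hp hu') hu
  have hpB : p ∩ B = ∅ := disjoint_iff_inter_eq_empty.1 (h.mono_left hp)
  rw [card_filter_subset_eq_card (A := K \ p), ← hcard, card_sdiff_add_card_eq_card hp]
  · exact fun t ht => by rw [((mem_joinSimplices h).1 ht).2.1, card_insert_of_notMem hup, hcard]
  · intro z
    rw [mem_joinSimplices h, mem_sdiff]
    constructor
    · rintro ⟨hzK, hzp⟩
      have hzB : z ∉ B := disjoint_left.1 h hzK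
      have hzup : z ∉ insert u p := by grind
      refine ⟨hzup, by grind, ?_, ?_⟩
      · rw [card_insert_of_notMem hzup, card_insert_of_notMem hup, hcard]
      · rw [insert_inter_of_notMem hzB, insert_inter_of_mem hu, hpB, insert_empty_eq,
          card_singleton]
    · rintro ⟨hz, hsub, -, hB⟩
      have hzB : z ∉ B := fun hzB =>
        hz (mem_insert.2 (.inl (card_le_one.1 hB z (by grind) u (by grind))))
      exact ⟨(mem_union.1 (hsub (mem_insert_self z _))).resolve_right hzB,
        fun hzp => hz (mem_insert_of_mem hzp)⟩

theorem edgesOf_joinSimplices (h : Disjoint K B) (hK : 2 ≤ #K) (hB : B.Nonempty) :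
    edgesOf (joinSimplices K B 2) = joinSimplices K B 1 := by
  ext e
  constructor
  · intro he
    obtain ⟨T, hT, he⟩ := mem_biUnion.1 he
    obtain ⟨heT, hcard⟩ := mem_powersetCard.1 he
    obtain ⟨hTV, -, hTB⟩ := (mem_joinSimplices h).1 hT
    exact (mem_joinSimplices h).2 ⟨heT.trans hTV, hcard,
      (card_le_card (inter_subset_inter_right heT)).trans hTB⟩
  · intro he
    have hpos : 0 < #{t ∈ joinSimplices K B 2 | e ⊆ t} := by
      rcases mem_joinSimplices_iff_exists.1 he with ⟨heK, hcard⟩ | ⟨u, hu, p, hp, hcard, rfl⟩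
      · have := card_filter_subset_joinSimplices h heK hcard
        have := hB.card_pos
        lia
      · have := card_filter_insert_subset_joinSimplices h hu hp hcard
        lia
    obtain ⟨T, hT⟩ := card_pos.1 hpos
    obtain ⟨hT, heT⟩ := mem_filter.1 hT
    exact mem_biUnion.2 ⟨T, hT, mem_powersetCard.2 ⟨heT, ((mem_joinSimplices h).1 he).2.1⟩⟩

end Join

section Spectrum

open Polynomial

variable {K B : Finset ℕ}

/-- The Hodge Laplacian on the vertices of the join of `K` with `B`. The all-ones matrix is its
down part, coming from the augmentation. -/
noncomputable def vertexLaplacian (K B : Finset ℕ) :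
    Matrix {v // v ∈ K ∪ B} {v // v ∈ K ∪ B} ℝ :=
  (delta0 (joinSimplices K B 1) (K ∪ B))ᵀ * delta0 (joinSimplices K B 1) (K ∪ B) + vecMulVec 1 1

theorem pair_mem_joinSimplices (h : Disjoint K B) {v w : ℕ} (hv : v ∈ K ∪ B) (hw : w ∈ K ∪ B)
    (hvw : v ≠ w) :
    {v, w} ∈ joinSimplices K B 1 ↔ ¬(v ∈ B ∧ w ∈ B) := by
  have hsub : {v, w} ⊆ K ∪ B := insert_subset hv (singleton_subset_iff.2 hw)
  rw [mem_joinSimplices h, card_pair hvw]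
  by_cases hvB : v ∈ B <;> by_cases hwB : w ∈ B <;> simp [hsub, hvB, hwB, card_pair hvw]

theorem vertexLaplacian_apply_of_ne (h : Disjoint K B) {v w : {v // v ∈ K ∪ B}} (hvw : v ≠ w) :
    vertexLaplacian K B v w = if v.1 ∈ B ∧ w.1 ∈ B then 1 else 0 := by
  rw [vertexLaplacian, Matrix.add_apply, delta0_transpose_mul_delta0_apply_of_ne
    (fun e he => ((mem_joinSimplices h).1 he).2.1) hvw, vecMulVec_apply]
  simp only [pair_mem_joinSimplices h v.2 w.2 (Subtype.coe_ne_coe.2 hvw), Pi.one_apply]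
  split_ifs <;> norm_num

theorem vertexLaplacian_apply_self (v : {v // v ∈ K ∪ B}) :
    vertexLaplacian K B v v = #{e ∈ joinSimplices K B 1 | {v.1} ⊆ e} + 1 := by
  simp only [vertexLaplacian, Matrix.add_apply, delta0_transpose_mul_delta0_apply_self,
    singleton_subset_iff, vecMulVec_apply, Pi.one_apply, mul_one]

theorem submatrix_vertexLaplacian (h : Disjoint K B) :
    (vertexLaplacian K B).submatrix (Equiv.Finset.union K B h) (Equiv.Finset.union K B h) =
      fromBlocks (scalar _ (#K + #B : ℝ)) 0 0 (scalar _ (#K : ℝ) + vecMulVec 1 1) := by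
  set φ := Equiv.Finset.union K B h
  have hoff {i j} (hij : i ≠ j) := vertexLaplacian_apply_of_ne h (φ.injective.ne hij)
  have hinl (v : {v // v ∈ K}) : (φ (.inl v)).1 = v := rfl
  have hinr (v : {v // v ∈ B}) : (φ (.inr v)).1 = v := rfl
  have hK (v : {v // v ∈ K}) : v.1 ∉ B := disjoint_left.1 h v.2
  ext (v | v) (w | w)
  · rcases eq_or_ne v w with rfl | hvw
    · have hcount := card_filter_subset_joinSimplices h (singleton_subset_iff.2 v.2)
        (card_singleton v.1)
      rw [submatrix_apply, vertexLaplacian_apply_self, hinl, fromBlocks_apply₁₁, scalar_apply,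
        diagonal_apply_eq]
      exact_mod_cast hcount
    · simp [hoff, hinl, hK, hvw, -map_natCast, -map_add]
  · simp [hoff, hinl, hK]
  · simp [hoff, hinl, hK]
  · rcases eq_or_ne v w with rfl | hvw
    · have hcount := card_filter_insert_subset_joinSimplices h v.2 (empty_subset K) card_empty
      simp [vertexLaplacian_apply_self, hinr, ← hcount, -map_natCast]
    · simp [hoff, hinr, hvw, -map_natCast]

theorem charpoly_vertexLaplacian (h : Disjoint K B) (hB : B.Nonempty) :
    (vertexLaplacian K B).charpoly =
      (X - C (#K + #B : ℝ)) ^ #K * ((X - C (#K : ℝ)) ^ (#B - 1) * (X - C (#K + #B : ℝ))) := by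
  have := hB.to_subtype
  rw [← charpoly_reindex (Equiv.Finset.union K B h).symm, reindex_apply, Equiv.symm_symm,
    submatrix_vertexLaplacian, charpoly_fromBlocks_zero₁₂, charpoly_scalar,
    charpoly_scalar_add_vecMulVec, one_dotProduct_one, Fintype.card_coe, Fintype.card_coe]

/-- The edges of the join of `K` with `B`, split into those inside `K` and those meeting `B`. -/
noncomputable def joinEdgesEquiv (h : Disjoint K B) (hK : 2 ≤ #K) (hB : B.Nonempty) :
    {e // e ∈ K.powersetCard 2} ⊕ {u // u ∈ B} × {p // p ∈ K.powersetCard 1} ≃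
      {e // e ∈ edgesOf (joinSimplices K B 2)} :=
  (joinSimplicesEquiv h 1).trans
    (Equiv.subtypeEquivRight fun e => by rw [edgesOf_joinSimplices h hK hB])

theorem card_eq_three_and_subset_of_mem_joinSimplices (h : Disjoint K B) :
    ∀ T ∈ joinSimplices K B 2, #T = 3 ∧ T ⊆ K ∪ B := fun _ hT =>
  have hT := (mem_joinSimplices h).1 hT
  ⟨hT.2.1, hT.1⟩

theorem hodgeLaplacian_joinSimplices_apply_of_ne (h : Disjoint K B)
    {e e' : {e // e ∈ edgesOf (joinSimplices K B 2)}} (hne : e ≠ e') :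
    hodgeLaplacian (joinSimplices K B 2) (K ∪ B) e e' =
      if #((e.1 ∪ e'.1) ∩ B) ≤ 1 then 0
      else ∑ v ∈ e.1 ∩ e'.1, vertexSign e v * vertexSign e' v := by
  have hF := card_eq_three_and_subset_of_mem_joinSimplices h
  obtain ⟨he, heV⟩ := card_and_subset_of_mem_edgesOf (fun T hT => (hF T hT).2) e.2
  obtain ⟨he', heV'⟩ := card_and_subset_of_mem_edgesOf (fun T hT => (hF T hT).2) e'.2
  rw [hodgeLaplacian_apply_of_ne hF hne]
  simp only [mem_joinSimplices h, union_subset heV heV', true_and]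
  by_cases hcard : #(e.1 ∪ e'.1) = 3
  · simp only [hcard, Nat.reduceAdd, true_and]
  · have hlt : #e.1 < #(e.1 ∪ e'.1) := card_lt_card <| left_lt_sup.2 fun hle =>
      hne (Subtype.ext (eq_of_subset_of_card_le hle (he.trans he'.symm).le).symm)
    have hinter : e.1 ∩ e'.1 = ∅ := by grind
    simp only [hcard, Nat.reduceAdd, false_and, hinter, sum_empty, ite_self]

/-- The vector of signs of the apexes `u ∈ B` in the cones `insert u p`. -/
noncomputable def coneSign (B p : Finset ℕ) : {u // u ∈ B} → ℝ :=
  fun u => vertexSign (insert u.1 p) u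

theorem coneSign_dotProduct_self (B p : Finset ℕ) : coneSign B p ⬝ᵥ coneSign B p = #B := by
  simp [dotProduct, coneSign, vertexSign_mul_self]

theorem sum_vertexSign_insert_inter_insert (h : Disjoint K B) {u u' : {u // u ∈ B}} (hu : u ≠ u')
    (p p' : {p // p ∈ K.powersetCard 1}) :
    ∑ v ∈ insert u.1 p.1 ∩ insert u'.1 p'.1,
        vertexSign (insert u.1 p.1) v * vertexSign (insert u'.1 p'.1) v =
      if p = p' then coneSign B p u * coneSign B p u' else 0 := by
  obtain ⟨⟨p, hp⟩, ⟨p', hp'⟩⟩ := p, p'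
  rw [mem_powersetCard] at hp hp'
  obtain ⟨q, rfl⟩ := card_eq_one.1 hp.2
  obtain ⟨q', rfl⟩ := card_eq_one.1 hp'.2
  have hBK {w x : ℕ} (hw : w ∈ B) (hx : {x} ⊆ K) : w ≠ x := by
    rintro rfl
    exact disjoint_left.1 h (singleton_subset_iff.1 hx) hw
  have hq := hBK u.2 hp.1
  have hq' := hBK u'.2 hp.1
  by_cases hqq' : q = q'
  · subst hqq'
    rw [show ({u.1, q} : Finset ℕ) ∩ {u'.1, q} = {q} by grind, sum_singleton, if_pos rfl, coneSign,
      coneSign, eq_neg_of_add_eq_zero_left (vertexSign_pair_add_vertexSign_pair hq),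
      eq_neg_of_add_eq_zero_left (vertexSign_pair_add_vertexSign_pair hq'), neg_mul_neg]
  · have hinter : ({u.1, q} : Finset ℕ) ∩ {u'.1, q'} = ∅ := by
      have := hBK u.2 hp'.1
      grind
    rw [hinter, sum_empty, if_neg fun heq => hqq' (singleton_injective (Subtype.mk.inj heq))]

theorem submatrix_hodgeLaplacian_joinSimplices (h : Disjoint K B) (hK : 2 ≤ #K) (hB : B.Nonempty) :
    (hodgeLaplacian (joinSimplices K B 2) (K ∪ B)).submatrix (joinEdgesEquiv h hK hB)
        (joinEdgesEquiv h hK hB) =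
      fromBlocks (scalar _ (#K + #B : ℝ)) 0 0
        (blockDiagonal fun p : {p // p ∈ K.powersetCard 1} =>
          scalar _ (#K : ℝ) + vecMulVec (coneSign B p) (coneSign B p)) := by
  set φ := joinEdgesEquiv h hK hB
  have hself (i) :=
    hodgeLaplacian_apply_self (card_eq_three_and_subset_of_mem_joinSimplices h) (φ i)
  have hoff {i j} (hij : i ≠ j) := hodgeLaplacian_joinSimplices_apply_of_ne h (φ.injective.ne hij)
  have hinl (s : {s // s ∈ K.powersetCard 2}) : (φ (.inl s)).1 = s := rfl
  have hinr (q : {u // u ∈ B} × {p // p ∈ K.powersetCard 1}) :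
    (φ (.inr q)).1 = insert q.1.1 q.2.1 := rfl
  have hdisj {i : ℕ} (p : {p // p ∈ K.powersetCard i}) : p.1 ∩ B = ∅ :=
    disjoint_iff_inter_eq_empty.1 (h.mono_left (mem_powersetCard.1 p.2).1)
  ext (s | ⟨u, p⟩) (s' | ⟨u', p'⟩)
  · rcases eq_or_ne s s' with rfl | hs
    · have hcount := card_filter_subset_joinSimplices h (mem_powersetCard.1 s.2).1
        (mem_powersetCard.1 s.2).2
      rw [submatrix_apply, hself, hinl, fromBlocks_apply₁₁, scalar_apply, diagonal_apply_eq]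
      exact_mod_cast hcount
    · simp [hoff, hinl, hdisj, union_inter_distrib_right, hs, -map_natCast, -map_add]
  · simp [hoff, hinl, hinr, hdisj, union_inter_distrib_right, insert_inter_of_mem]
  · simp [hoff, hinl, hinr, hdisj, union_inter_distrib_right, insert_inter_of_mem]
  · rcases eq_or_ne u u' with rfl | hu
    · rcases eq_or_ne p p' with rfl | hp
      · have hcount := card_filter_insert_subset_joinSimplices h u.2 (mem_powersetCard.1 p.2).1
          (mem_powersetCard.1 p.2).2
        have hsign : coneSign B p u * coneSign B p u = 1 :=
          vertexSign_mul_self (mem_insert_self _ _)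
        simp only [submatrix_apply, hself, hinr, ← hcount, Nat.reduceAdd, Nat.cast_add,
          Nat.cast_one, scalar_apply, fromBlocks_apply₂₂, blockDiagonal_apply_eq,
          Matrix.add_apply, diagonal_apply_eq, vecMulVec_apply, hsign]
        ring
      · simp [hoff, hinr, hdisj, union_inter_distrib_right, insert_inter_of_mem, hp,
          blockDiagonal_apply]
    · have hcard : ¬#{u'.1, u.1} ≤ 1 := by simp [card_pair (Subtype.coe_ne_coe.2 hu.symm)]
      simp [hoff, hinr, hdisj, union_inter_distrib_right, insert_inter_of_mem, hu, hcard,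
        blockDiagonal_apply, sum_vertexSign_insert_inter_insert h hu, vecMulVec_apply,
        -map_natCast]

theorem charpoly_hodgeLaplacian_joinSimplices (h : Disjoint K B) (hK : 2 ≤ #K) (hB : B.Nonempty) :
    (hodgeLaplacian (joinSimplices K B 2) (K ∪ B)).charpoly =
      (X - C (#K + #B : ℝ)) ^ (#K).choose 2 *
        ((X - C (#K : ℝ)) ^ (#B - 1) * (X - C (#K + #B : ℝ))) ^ #K := by
  have := hB.to_subtype
  rw [← charpoly_reindex (joinEdgesEquiv h hK hB).symm, reindex_apply, Equiv.symm_symm,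
    submatrix_hodgeLaplacian_joinSimplices, charpoly_fromBlocks_zero₁₂, charpoly_scalar,
    charpoly_blockDiagonal]
  simp only [charpoly_scalar_add_vecMulVec, coneSign_dotProduct_self, prod_const, Fintype.card_coe,
    card_powersetCard, card_univ, Nat.choose_one_right]

theorem charpoly_delta0_mul_charpoly_vecMulVec_one_one (h : Disjoint K B) :
    (delta0 (joinSimplices K B 1) (K ∪ B) * (delta0 (joinSimplices K B 1) (K ∪ B))ᵀ).charpoly *
        (vecMulVec (1 : {v // v ∈ K ∪ B} → ℝ) 1).charpoly =
      X ^ #(joinSimplices K B 1) * (vertexLaplacian K B).charpoly := by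
  have hzero : delta0 (joinSimplices K B 1) (K ∪ B) *
      replicateCol Unit (1 : {v // v ∈ K ∪ B} → ℝ) = 0 := by
    rw [← replicateCol_mulVec, delta0_mulVec_one, replicateCol_zero]
    exact fun e he => ⟨((mem_joinSimplices h).1 he).2.1, ((mem_joinSimplices h).1 he).1⟩
  rw [vertexLaplacian, vecMulVec_eq Unit, charpoly_mul_charpoly_of_comp_eq_zero hzero,
    Fintype.card_coe]

theorem charpoly_delta1_mul_charpoly_delta0 {F : Finset (Finset ℕ)} (hF : ∀ T ∈ F, #T = 3)
    (V : Finset ℕ) :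
    (delta1 F * (delta1 F)ᵀ).charpoly *
        (delta0 (edgesOf F) V * (delta0 (edgesOf F) V)ᵀ).charpoly =
      X ^ #F * (hodgeLaplacian F V).charpoly := by
  rw [charpoly_mul_charpoly_of_comp_eq_zero (delta1_mul_delta0 hF V), Fintype.card_coe,
    hodgeLaplacian]

theorem charpoly_delta1_mul_transpose_joinSimplices (h : Disjoint K B) (hK : 2 ≤ #K)
    (hB : B.Nonempty) :
    (delta1 (joinSimplices K B 2) * (delta1 (joinSimplices K B 2))ᵀ).charpoly =
      X ^ ((#K).choose 3 + (#B - 1) * (#K - 1).choose 2) *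
        (X - C (#K : ℝ)) ^ ((#B - 1) * (#K - 1)) * (X - C (#K + #B : ℝ)) ^ (#K).choose 2 := by
  have hup := charpoly_delta1_mul_charpoly_delta0
    (fun T hT => (card_eq_three_and_subset_of_mem_joinSimplices h T hT).1) (K ∪ B)
  rw [card_joinSimplices h, charpoly_hodgeLaplacian_joinSimplices h hK hB] at hup
  have hdown := charpoly_delta0_mul_charpoly_vecMulVec_one_one h
  have := (hB.mono (subset_union_right (s₁ := K))).to_subtype
  rw [charpoly_vecMulVec_one_one, card_joinSimplices h, Nat.choose_one_right, Fintype.card_coe,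
    card_union_of_disjoint h, Nat.cast_add, charpoly_vertexLaplacian h hB,
    ← edgesOf_joinSimplices h hK hB] at hdown
  obtain ⟨c, hc⟩ : ∃ c, #K = c + 1 := Nat.exists_eq_succ_of_ne_zero (by lia)
  obtain ⟨b, hb⟩ : ∃ b, #B = b + 1 := Nat.exists_eq_succ_of_ne_zero hB.card_ne_zero
  have hne : X ^ ((#K).choose 2 + #B * #K) * ((X - C (#K + #B : ℝ)) ^ #K *
      ((X - C (#K : ℝ)) ^ (#B - 1) * (X - C (#K + #B : ℝ)))) ≠ 0 :=
    ((monic_X_pow _).mul <| ((monic_X_sub_C _).pow _).mul <|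
      ((monic_X_sub_C _).pow _).mul (monic_X_sub_C _)).ne_zero
  have hchoose : (c + 1).choose 2 = c + c.choose 2 := by
    rw [Nat.choose_succ_succ', Nat.choose_one_right]
  apply mul_right_cancel₀ hne
  nth_rw 1 [← hdown]
  rw [← mul_assoc, hup]
  generalize X - C (#K + #B : ℝ) = r
  generalize X - C (#K : ℝ) = q
  rw [hc, hb, hchoose, show c + 1 + (b + 1) - 1 = c + b + 1 by lia, add_tsub_cancel_right,
    add_tsub_cancel_right]
  ring

theorem stmt15_general (h : Disjoint K B) (hK : 2 ≤ #K) (hB : B.Nonempty) :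
    Fintype.card {T // T ∈ joinSimplices K B 2} = (#K).choose 3 + #B * (#K).choose 2 ∧
    (delta1 (joinSimplices K B 2) * (delta1 (joinSimplices K B 2))ᵀ).charpoly.roots =
      Multiset.replicate ((#K).choose 3 + (#B - 1) * (#K - 1).choose 2) (0 : ℝ) +
      Multiset.replicate ((#B - 1) * (#K - 1)) (#K : ℝ) +
      Multiset.replicate ((#K).choose 2) ((#B : ℝ) + (#K : ℝ)) := by
  refine ⟨by rw [Fintype.card_coe, card_joinSimplices h], ?_⟩
  have hmonic := (monic_X_pow (R := ℝ) ((#K).choose 3 + (#B - 1) * (#K - 1).choose 2)).mul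
    ((monic_X_sub_C (#K : ℝ)).pow ((#B - 1) * (#K - 1)))
  rw [charpoly_delta1_mul_transpose_joinSimplices h hK hB,
    roots_mul (hmonic.mul ((monic_X_sub_C _).pow _)).ne_zero, roots_mul hmonic.ne_zero,
    roots_X_pow, roots_pow, roots_pow, roots_X_sub_C, roots_X_sub_C, add_comm (#B : ℝ)]
  simp only [Multiset.nsmul_singleton]

end Spectrum

/-- The spectrum of the 2-down Laplacian `δ₁(𝒯_{c,b}) δ₁(𝒯_{c,b})ᵀ` (a square matrix
of size `C(c,3) + b·C(c,2)`): eigenvalue `0` with multiplicity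
`C(c,3) + (b-1)·C(c-1,2)`, eigenvalue `c` with multiplicity `(b-1)(c-1)`, and
eigenvalue `b + c` with multiplicity `C(c,2)`. -/
theorem stmt15 (c b : ℕ) (hc : 3 ≤ c) (hb : 1 ≤ b) :
    Fintype.card {T // T ∈ Tcb c b} = c.choose 3 + b * c.choose 2 ∧
    (delta1 (Tcb c b) * (delta1 (Tcb c b))ᵀ).charpoly.roots =
      Multiset.replicate (c.choose 3 + (b - 1) * (c - 1).choose 2) (0 : ℝ) +
      Multiset.replicate ((b - 1) * (c - 1)) (c : ℝ) +
      Multiset.replicate (c.choose 2) ((b : ℝ) + (c : ℝ)) := by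
  have hK : #(Icc 1 c) = c := Nat.card_Icc 1 c
  have hB : #(Icc (c + 1) (c + b)) = b := by rw [Nat.card_Icc]; lia
  have hdisj : Disjoint (Icc 1 c) (Icc (c + 1) (c + b)) := disjoint_left.2 (by grind)
  simpa only [hK, hB] using! stmt15_general hdisj (by lia) (card_pos.1 (by lia))
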